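/- Let d = 1, A = 1, ε ∈ [0,1) and b(x,μ) = −x + εB(μ), where B(μ) = ∫x μ(dx). Let γ₀ denote the standard Gaussian measure on ℝ (a stationary solution of the corresponding nonlinear stationary equation). Let ν be a Borel probability measure on ℝ with ∫x² dν < ∞, and let (μ_t)_{t≥0} be a solution of the Cauchy problem ∂_tμ_t = L_{μ_t}^*μ_t with μ_0 = ν such that sup_{t∈[0,T]}∫x² dμ_t < ∞ for each T > 0 and such that the defining integral identity holds for every φ ∈ C²(ℝ) with sup_x (|φ(x)| + |φ'(x)| + |φ''(x)|)/(1+x²) < ∞. Then there exist α₁, α₂ > 0 such that the total variation norm of the measure (1+x²)^{1/2}·(μ_t − γ₀) is at most α₁ e^{−α₂ t} for all t ≥ 0. -/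

import Mathlib

open MeasureTheory Real Set Filter ProbabilityTheory
open scoped Topology NNReal ENNReal

noncomputable section

/-- The one-dimensional Kolmogorov operator `L φ = φ'' + b φ'`. -/
def L1op (bb : ℝ → ℝ) (φ : ℝ → ℝ) (x : ℝ) : ℝ :=
  deriv (deriv φ) x + bb x * deriv φ x

/-- The mean `B(μ) = ∫ x μ(dx)`. -/
def Bmean (μ : Measure ℝ) : ℝ := ∫ x, x ∂μ

/-- Weighted total-variation distance `‖W·(μ - ν)‖_{TV}` expressed by duality. -/
def wDist1 (W : ℝ → ℝ) (μ ν : Measure ℝ) : ℝ :=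
  ⨆ f : {f : ℝ → ℝ // Measurable f ∧ ∀ x, |f x| ≤ W x},
    (∫ x, f.1 x ∂μ - ∫ x, f.1 x ∂ν)

/-!
The mean of a solution decays like `e^{-(1-ε)t}`, after which the equation is linear with a known
time-dependent drift. Integrals of `cos (κ t * x + θ t)` along its characteristics then solve scalar
linear differential equations, so the characteristic function of `μ_t` is explicit. This gives
Mehler's representation: `μ_t` is the convolution of the image of `μ_0` under
`x ↦ e^{-t} x + B(μ_0) (e^{-(1-ε)t} - e^{-t})` with the centred Gaussian measure of variance
`v = 1 - e^{-2t}`, and `γ₀` is the convolution of its own image under `x ↦ e^{-t} x` with the same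
Gaussian. By the Cameron–Martin formula, convolving a probability measure `Q` with this Gaussian
changes the latter, in total variation weighted by `1 + x²`, by at most
`4 e^{2 + v/2 + 4/v} ∫ (|x| + x²) dQ`. For both images this integral is
`O(e^{-min(1, 1-ε) t})`, and `v ≥ 1/2` for `t ≥ 1`; for `t ≤ 1` a second moment bound suffices.
-/

section Primitive

variable {E : Type*} [NormedAddCommGroup E] [NormedSpace ℝ E]

lemma continuousOn_primitive_setOf_integrableOn_Icc (h : ℝ → E) (a : ℝ) :
    ContinuousOn (fun t => ∫ s in a..t, h s) {t | a ≤ t ∧ IntegrableOn h (Icc a t)} := by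
  intro t ht
  obtain ⟨b, ⟨hab, hb⟩, hmem⟩ : ∃ b, (a ≤ b ∧ IntegrableOn h (Icc a b)) ∧
      Icc a b ∈ 𝓝[{t | a ≤ t ∧ IntegrableOn h (Icc a t)}] t := by
    by_cases hmax : ∃ b, (a ≤ b ∧ IntegrableOn h (Icc a b)) ∧ t < b
    · obtain ⟨b, hb, htb⟩ := hmax
      refine ⟨b, hb, ?_⟩
      filter_upwards [self_mem_nhdsWithin, mem_nhdsWithin_of_mem_nhds (Iic_mem_nhds htb)]
        with x hx hxb using ⟨hx.1, hxb⟩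
    · push Not at hmax
      refine ⟨t, ht, ?_⟩
      filter_upwards [self_mem_nhdsWithin] with x hx using ⟨hx.1, hmax x hx⟩
  have hcont : ContinuousOn (fun t => ∫ s in a..t, h s) (Icc a b) := by
    rw [← uIcc_of_le hab] at hb ⊢
    exact intervalIntegral.continuousOn_primitive_interval hb
  exact (hcont t (mem_of_mem_nhdsWithin ht hmem)).mono_of_mem_nhdsWithin hmem

lemma aestronglyMeasurable_primitive (h : ℝ → E) (a : ℝ) :
    AEStronglyMeasurable (fun t => ∫ s in a..t, h s) (volume.restrict (Ici a)) := by
  have hconn : {t | a ≤ t ∧ IntegrableOn h (Icc a t)}.OrdConnected :=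
    ⟨fun x hx y hy z hz => ⟨hx.1.trans hz.1, hy.2.mono_set (Icc_subset_Icc_right hz.2)⟩⟩
  have hon := (continuousOn_primitive_setOf_integrableOn_Icc h a).aestronglyMeasurable
    (μ := volume) hconn.measurableSet
  -- Where `h` is not integrable on `[a, t]`, the primitive is `0` by convention.
  have hoff : AEStronglyMeasurable (fun t => ∫ s in a..t, h s)
      (volume.restrict (Ici a \ {t | a ≤ t ∧ IntegrableOn h (Icc a t)})) := by
    refine aestronglyMeasurable_zero.congr <| (ae_restrict_iff'
      (measurableSet_Ici.diff hconn.measurableSet)).2 (Eventually.of_forall fun t ht => ?_)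
    exact (intervalIntegral.integral_undef fun hi =>
      ht.2 ⟨ht.1, (intervalIntegrable_iff_integrableOn_Icc_of_le ht.1).1 hi⟩).symm
  exact (aestronglyMeasurable_union_iff.2 ⟨hon, hoff⟩).mono_set (by simp)

lemma continuousOn_primitive_Ici {h : ℝ → E} {a : ℝ} (hh : ∀ t, IntegrableOn h (Icc a t)) :
    ContinuousOn (fun t => ∫ s in a..t, h s) (Ici a) :=
  (continuousOn_primitive_setOf_integrableOn_Icc h a).mono fun t ht => ⟨ht, hh t⟩

lemma hasDerivWithinAt_primitive_Ici [CompleteSpace E] {h : ℝ → E} {a t : ℝ}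
    (hh : ContinuousOn h (Ici a)) (ht : a ≤ t) :
    HasDerivWithinAt (fun t => ∫ s in a..t, h s) (h t) (Ici a) t := by
  have hmax : Continuous fun s => h (max a s) :=
    hh.comp_continuous (by fun_prop) fun s => le_max_left a s
  have hderiv := (hmax.integral_hasStrictDerivAt a t).hasDerivAt.hasDerivWithinAt (s := Ici a)
  have heq : ∀ x, a ≤ x → ∫ s in a..x, h s = ∫ s in a..x, h (max a s) := fun x hx =>
    intervalIntegral.integral_congr fun s hs => by
      rw [uIcc_of_le hx] at hs
      simp only [max_eq_right hs.1]
  rw [max_eq_right ht] at hderiv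
  exact hderiv.congr heq (heq t ht)

end Primitive

section Calculus

lemma eq_mul_exp_of_hasDerivWithinAt {F A A' : ℝ → ℝ} {a t : ℝ}
    (hF : ∀ s, a ≤ s → HasDerivWithinAt F (A' s * F s) (Ici a) s)
    (hA : ∀ s, HasDerivAt A (A' s) s) (ht : a ≤ t) : F t = F a * exp (A t - A a) := by
  have hconst : ∀ s, a ≤ s → HasDerivWithinAt (fun r => F r * exp (-A r)) 0 (Ici a) s :=
    fun s hs => by
      convert! (hF s hs).mul (hA s).neg.exp.hasDerivWithinAt using 1
      ring
  have heq : F t * exp (-A t) = F a * exp (-A a) :=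
    constant_of_has_deriv_right_zero
      (fun s hs => (hconst s hs.1).continuousWithinAt.mono Icc_subset_Ici_self)
      (fun s hs => (hconst s hs.1).mono (Ici_subset_Ici.2 hs.1)) t ⟨ht, le_rfl⟩
  rw [sub_eq_neg_add, exp_add, ← mul_assoc, ← heq, mul_assoc, ← exp_add, neg_add_cancel, exp_zero,
    mul_one]

lemma hasDerivWithinAt_mul_of_eq_zero {f g : ℝ → ℝ} {f' x : ℝ} {s : Set ℝ}
    (hf : HasDerivWithinAt f f' s x) (hfx : f x = 0) (hg : ContinuousWithinAt g s x) :
    HasDerivWithinAt (fun y => f y * g y) (f' * g x) s x := by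
  rw [hasDerivWithinAt_iff_tendsto_slope] at hf ⊢
  refine (hf.mul (hg.mono_left (nhdsWithin_mono _ sdiff_subset))).congr fun y => ?_
  simp only [slope_def_field, hfx]
  ring

lemma isLittleO_sub_sq_of_hasDerivAt {f : ℝ → ℝ} {f' x : ℝ} (hf : HasDerivAt f f' x) :
    (fun y => (f y - f x) ^ 2) =o[𝓝 x] fun y => y - x :=
  (hf.isBigO_sub.pow 2).trans_isLittleO <| by
    simpa using Asymptotics.isLittleO_pow_sub_sub x one_lt_two

lemma abs_cos_add_sub_add_mul_sin_le (y d : ℝ) :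
    |cos (y + d) - cos y + d * sin y| ≤ d ^ 2 := by
  have hderiv : ∀ u ∈ uIcc 0 d,
      HasDerivWithinAt (fun u => cos (y + u) + u * sin y) (sin y - sin (y + u)) (uIcc 0 d) u := by
    intro u _
    have hcos : HasDerivAt (fun u => cos (y + u)) (-sin (y + u)) u := by
      simpa using ((hasDerivAt_id u).const_add y).cos
    convert! (hcos.add ((hasDerivAt_id u).mul_const (sin y))).hasDerivWithinAt using 1
    ring
  have hbound : ∀ u ∈ uIcc 0 d, ‖sin y - sin (y + u)‖ ≤ |d| := by
    intro u hu
    have hsin := lipschitzWith_sin.dist_le_mul y (y + u)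
    have hud : |u| ≤ |d| := by simpa using abs_sub_left_of_mem_uIcc hu
    simpa [Real.dist_eq] using hsin.trans (by simpa using hud)
  have hmvt := Convex.norm_image_sub_le_of_norm_hasDerivWithin_le hderiv hbound
    (convex_uIcc 0 d) left_mem_uIcc right_mem_uIcc
  simpa [add_sub_right_comm, ← sq] using hmvt

end Calculus

section Growth

open scoped ContDiff

/-- `φ` is smooth and all its derivatives, including `φ` itself, are `O((1 + |x|) ^ q)`. For
`q ≤ 2` these are test functions of the Cauchy problem; unlike `C²` they form a class that the
Ornstein–Uhlenbeck generator acts on, raising `q` by one. -/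
structure IsSmoothOfGrowth (q : ℕ) (φ : ℝ → ℝ) : Prop where
  contDiff : ContDiff ℝ ∞ φ
  isBigO (n : ℕ) : iteratedDeriv n φ =O[⊤] fun x => (1 + |x|) ^ q

namespace IsSmoothOfGrowth

variable {q r : ℕ} {φ ψ : ℝ → ℝ}

lemma mono (hφ : IsSmoothOfGrowth q φ) (hqr : q ≤ r) : IsSmoothOfGrowth r φ where
  contDiff := hφ.contDiff
  isBigO n := (hφ.isBigO n).trans <| Asymptotics.isBigO_of_le _ fun x => by
    simp only [norm_pow]
    exact pow_le_pow_right₀ (by rw [norm_of_nonneg (by positivity)]; simp) hqr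

lemma deriv (hφ : IsSmoothOfGrowth q φ) : IsSmoothOfGrowth q (deriv φ) where
  contDiff := (contDiff_infty_iff_deriv.1 hφ.contDiff).2
  isBigO n := by simpa only [iteratedDeriv_succ'] using hφ.isBigO (n + 1)

lemma add (hφ : IsSmoothOfGrowth q φ) (hψ : IsSmoothOfGrowth q ψ) :
    IsSmoothOfGrowth q (φ + ψ) where
  contDiff := hφ.contDiff.add hψ.contDiff
  isBigO n := ((hφ.isBigO n).add (hψ.isBigO n)).congr_left fun _ =>
    (iteratedDeriv_add (contDiff_infty.1 hφ.contDiff n).contDiffAt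
      (contDiff_infty.1 hψ.contDiff n).contDiffAt).symm

lemma mul (hφ : IsSmoothOfGrowth q φ) (hψ : IsSmoothOfGrowth r ψ) :
    IsSmoothOfGrowth (q + r) (φ * ψ) where
  contDiff := hφ.contDiff.mul hψ.contDiff
  isBigO n := by
    have hsum : (fun x => ∑ i ∈ Finset.range (n + 1),
        (n.choose i : ℝ) * iteratedDeriv i φ x * iteratedDeriv (n - i) ψ x)
          =O[⊤] fun x => (1 + |x|) ^ (q + r) := by
      refine Asymptotics.IsBigO.fun_sum fun i _ => ?_
      simp only [pow_add]
      exact ((hφ.isBigO i).const_mul_left _).mul (hψ.isBigO (n - i))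
    exact hsum.congr_left fun x =>
      (iteratedDeriv_mul (contDiff_infty.1 hφ.contDiff n).contDiffAt
        (contDiff_infty.1 hψ.contDiff n).contDiffAt).symm

lemma affine (a b : ℝ) : IsSmoothOfGrowth 1 (fun x => a * x + b) where
  contDiff := by fun_prop
  isBigO n := by
    have hderiv : _root_.deriv (fun x => a * x + b) = fun _ => a := by
      ext x
      simp
    refine Asymptotics.isBigO_top.2 ⟨|a| + |b|, fun x => ?_⟩
    simp only [norm_eq_abs, pow_one, abs_of_nonneg (by positivity : 0 ≤ 1 + |x|)]
    rcases n with _ | n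
    · calc |a * x + b| ≤ |a| * |x| + |b| := (abs_add_le _ _).trans_eq (by rw [abs_mul])
        _ ≤ (|a| + |b|) * (1 + |x|) := by nlinarith [abs_nonneg a, abs_nonneg b, abs_nonneg x]
    · rw [iteratedDeriv_succ', hderiv, iteratedDeriv_const]
      split_ifs
      · nlinarith [abs_nonneg a, abs_nonneg b, abs_nonneg x]
      · rw [abs_zero]; positivity

lemma fun_id : IsSmoothOfGrowth 1 fun x => x := by
  simpa only [one_mul, add_zero] using affine 1 0

lemma fun_neg : IsSmoothOfGrowth 1 fun x => -x := by
  simpa only [neg_one_mul, add_zero] using affine (-1) 0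

lemma cos_affine (k θ : ℝ) : IsSmoothOfGrowth 0 (fun x => cos (k * x + θ)) where
  contDiff := by fun_prop
  isBigO n := by
    refine Asymptotics.isBigO_top.2 ⟨|k| ^ n, fun x => ?_⟩
    rw [iteratedDeriv_comp_const_mul (f := fun z => cos (z + θ)) (by fun_prop),
      iteratedDeriv_comp_add_const]
    simpa using mul_le_mul_of_nonneg_left (abs_iteratedDeriv_cos_le_one n (k * x + θ))
      (by positivity : 0 ≤ |k| ^ n)

lemma sin_affine (k θ : ℝ) : IsSmoothOfGrowth 0 (fun x => sin (k * x + θ)) := by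
  simpa only [← add_sub_assoc, cos_sub_pi_div_two] using cos_affine k (θ - π / 2)

lemma l1op {b : ℝ → ℝ} (hb : IsSmoothOfGrowth r b) (hφ : IsSmoothOfGrowth q φ) :
    IsSmoothOfGrowth (r + q) (L1op b φ) :=
  (hφ.deriv.deriv.mono (q.le_add_left r)).add (hb.mul hφ.deriv)

lemma exists_abs_le (hφ : IsSmoothOfGrowth 2 φ) : ∃ C, ∀ x, |φ x| ≤ C * (1 + x ^ 2) := by
  obtain ⟨C, hC⟩ := Asymptotics.isBigO_top.1 (hφ.isBigO 0)
  refine ⟨2 * |C|, fun x => ?_⟩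
  have hx := hC x
  simp only [iteratedDeriv_zero, norm_pow, norm_eq_abs, sq_abs] at hx
  calc |φ x| ≤ |C| * (1 + |x|) ^ 2 := hx.trans (by gcongr; exact le_abs_self C)
    _ ≤ 2 * |C| * (1 + x ^ 2) := by
      rw [← sq_abs x]
      nlinarith [mul_nonneg (abs_nonneg C) (sq_nonneg (1 - |x|))]

end IsSmoothOfGrowth

end Growth

section QuadraticGrowth

variable {P : Measure ℝ} {f : ℝ → ℝ} {C : ℝ}

lemma integrable_of_abs_le_mul_one_add_sq [IsFiniteMeasure P] (hP : Integrable (fun x => x ^ 2) P)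
    (hf : AEStronglyMeasurable f P) (hfC : ∀ x, |f x| ≤ C * (1 + x ^ 2)) : Integrable f P :=
  (((integrable_const 1).add hP).const_mul C).mono' hf (Eventually.of_forall hfC)

lemma abs_integral_le_mul_one_add_integral_sq [IsProbabilityMeasure P]
    (hP : Integrable (fun x => x ^ 2) P) (hfC : ∀ x, |f x| ≤ C * (1 + x ^ 2)) :
    |∫ x, f x ∂P| ≤ C * (1 + ∫ x, x ^ 2 ∂P) := by
  have hsq : Integrable (fun x => 1 + x ^ 2) P := (integrable_const 1).add hP
  calc ‖∫ x, f x ∂P‖ ≤ ∫ x, C * (1 + x ^ 2) ∂P :=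
        norm_integral_le_of_norm_le (hsq.const_mul C) (Eventually.of_forall hfC)
    _ = C * (1 + ∫ x, x ^ 2 ∂P) := by
        rw [integral_const_mul, integral_add (integrable_const 1) hP]
        simp

end QuadraticGrowth

section Solution

/-- `μt` solves the Cauchy problem for `∂ₜμₜ = L_{μₜ}^* μₜ` with drift `b(x, μ) = -x + ε B(μ)` and
initial condition `μt 0`, in the class of probability measures with locally bounded second
moments. -/
structure IsOUSolution (ε : ℝ) (μt : ℝ → Measure ℝ) : Prop where
  isProbabilityMeasure : ∀ t, 0 ≤ t → IsProbabilityMeasure (μt t)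
  integrable_sq : ∀ t, 0 ≤ t → Integrable (fun x => x ^ 2) (μt t)
  exists_integral_sq_le : ∀ T : ℝ, 0 < T → ∃ M : ℝ, ∀ t ∈ Icc 0 T, ∫ x, x ^ 2 ∂(μt t) ≤ M
  integral_sub_eq : ∀ φ : ℝ → ℝ, ContDiff ℝ 2 φ →
    (∃ M : ℝ, ∀ x, |φ x| + |deriv φ x| + |deriv (deriv φ) x| ≤ M * (1 + x ^ 2)) →
    ∀ t : ℝ, 0 ≤ t →
      ∫ x, φ x ∂(μt t) - ∫ x, φ x ∂(μt 0)
        = ∫ s in (0 : ℝ)..t, ∫ x, L1op (fun y => -y + ε * Bmean (μt s)) φ x ∂(μt s)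

namespace IsOUSolution

variable {ε : ℝ} {μt : ℝ → Measure ℝ} {φ : ℝ → ℝ}

lemma integrable (h : IsOUSolution ε μt) (hφ : IsSmoothOfGrowth 2 φ) {t : ℝ} (ht : 0 ≤ t) :
    Integrable φ (μt t) := by
  have := h.isProbabilityMeasure t ht
  obtain ⟨C, hC⟩ := hφ.exists_abs_le
  exact integrable_of_abs_le_mul_one_add_sq (h.integrable_sq t ht)
    hφ.contDiff.continuous.aestronglyMeasurable hC

lemma exists_abs_integral_le (h : IsOUSolution ε μt) (hφ : IsSmoothOfGrowth 2 φ) (T : ℝ) :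
    ∃ K, ∀ t ∈ Icc 0 T, |∫ x, φ x ∂(μt t)| ≤ K := by
  obtain ⟨C, hC⟩ := hφ.exists_abs_le
  obtain ⟨M, hM⟩ := h.exists_integral_sq_le (max T 1) (by positivity)
  refine ⟨C * (1 + M), fun t ht => ?_⟩
  have := h.isProbabilityMeasure t ht.1
  have hC₀ : 0 ≤ C := by simpa using (abs_nonneg _).trans (hC 0)
  refine (abs_integral_le_mul_one_add_integral_sq (h.integrable_sq t ht.1) hC).trans ?_
  gcongr
  exact hM t ⟨ht.1, ht.2.trans (le_max_left T 1)⟩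

lemma integral_eq_add_primitive (h : IsOUSolution ε μt) (hφ : IsSmoothOfGrowth 2 φ) {t : ℝ}
    (ht : 0 ≤ t) :
    ∫ x, φ x ∂(μt t) = ∫ x, φ x ∂(μt 0)
      + ∫ s in (0 : ℝ)..t, ∫ x, L1op (fun y => -y + ε * Bmean (μt s)) φ x ∂(μt s) := by
  obtain ⟨C₀, h₀⟩ := hφ.exists_abs_le
  obtain ⟨C₁, h₁⟩ := hφ.deriv.exists_abs_le
  obtain ⟨C₂, h₂⟩ := hφ.deriv.deriv.exists_abs_le
  have hφ_le : ∀ x, |φ x| + |deriv φ x| + |deriv (deriv φ) x| ≤ (C₀ + C₁ + C₂) * (1 + x ^ 2) :=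
    fun x => by linarith [h₀ x, h₁ x, h₂ x]
  exact sub_eq_iff_eq_add'.1 <| h.integral_sub_eq φ
    (contDiff_infty.1 hφ.contDiff 2) ⟨C₀ + C₁ + C₂, hφ_le⟩ t ht

lemma aestronglyMeasurable_integral (h : IsOUSolution ε μt) (hφ : IsSmoothOfGrowth 2 φ) :
    AEStronglyMeasurable (fun t => ∫ x, φ x ∂(μt t)) (volume.restrict (Ici 0)) :=
  ((aestronglyMeasurable_primitive _ 0).const_add (∫ x, φ x ∂(μt 0))).congr <|
    (ae_restrict_iff' measurableSet_Ici).2 <| Eventually.of_forall fun _ ht =>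
      (h.integral_eq_add_primitive hφ ht).symm

lemma integral_l1op (h : IsOUSolution ε μt) (hφ : IsSmoothOfGrowth 1 φ) {t : ℝ} (ht : 0 ≤ t) :
    ∫ x, L1op (fun y => -y + ε * Bmean (μt t)) φ x ∂(μt t)
      = ∫ x, L1op (fun y => -y) φ x ∂(μt t) + ε * Bmean (μt t) * ∫ x, deriv φ x ∂(μt t) := by
  rw [← integral_const_mul, ← integral_add (h.integrable (IsSmoothOfGrowth.fun_neg.l1op hφ) ht)
    ((h.integrable (hφ.deriv.mono one_le_two) ht).const_mul _)]
  congr 1 with x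
  simp only [L1op]
  ring

lemma integrableOn_integral_l1op (h : IsOUSolution ε μt) (hφ : IsSmoothOfGrowth 1 φ) (T : ℝ) :
    IntegrableOn (fun t => ∫ x, L1op (fun y => -y + ε * Bmean (μt t)) φ x ∂(μt t)) (Icc 0 T) := by
  have hid := IsSmoothOfGrowth.fun_id.mono one_le_two
  have hdrift := IsSmoothOfGrowth.fun_neg.l1op hφ
  have hderiv := hφ.deriv.mono one_le_two
  obtain ⟨K₀, h₀⟩ := h.exists_abs_integral_le hdrift T
  obtain ⟨K₁, h₁⟩ := h.exists_abs_integral_le hid T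
  obtain ⟨K₂, h₂⟩ := h.exists_abs_integral_le hderiv T
  have hmeas := ((h.aestronglyMeasurable_integral hdrift).add
    (((h.aestronglyMeasurable_integral hid).const_mul ε).mul
      (h.aestronglyMeasurable_integral hderiv))).mono_set (Icc_subset_Ici_self : Icc 0 T ⊆ Ici 0)
  refine IntegrableOn.congr_fun (IntegrableOn.of_bound measure_Icc_lt_top hmeas
    (K₀ + |ε| * K₁ * K₂) ?_) (fun t ht => (h.integral_l1op hφ ht.1).symm) measurableSet_Icc
  refine (ae_restrict_iff' measurableSet_Icc).2 (Eventually.of_forall fun t ht => ?_)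
  refine (norm_add_le _ _).trans (add_le_add (h₀ t ht) ?_)
  simp only [Pi.mul_apply, norm_mul, norm_eq_abs]
  have hK₁ := (abs_nonneg _).trans (h₁ t ht)
  gcongr
  · exact h₁ t ht
  · exact h₂ t ht

lemma continuousOn_integral (h : IsOUSolution ε μt) (hφ : IsSmoothOfGrowth 1 φ) :
    ContinuousOn (fun t => ∫ x, φ x ∂(μt t)) (Ici 0) :=
  (continuousOn_const.add (continuousOn_primitive_Ici (h.integrableOn_integral_l1op hφ))).congr
    fun _ ht => h.integral_eq_add_primitive (hφ.mono one_le_two) ht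

lemma continuousOn_Bmean (h : IsOUSolution ε μt) : ContinuousOn (fun t => Bmean (μt t)) (Ici 0) :=
  h.continuousOn_integral IsSmoothOfGrowth.fun_id

lemma hasDerivWithinAt_integral_of_continuousOn (h : IsOUSolution ε μt)
    (hφ : IsSmoothOfGrowth 2 φ)
    (hc : ContinuousOn (fun t => ∫ x, L1op (fun y => -y + ε * Bmean (μt t)) φ x ∂(μt t)) (Ici 0))
    {t : ℝ} (ht : 0 ≤ t) :
    HasDerivWithinAt (fun t => ∫ x, φ x ∂(μt t))
      (∫ x, L1op (fun y => -y + ε * Bmean (μt t)) φ x ∂(μt t)) (Ici 0) t :=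
  ((hasDerivWithinAt_primitive_Ici hc ht).const_add (∫ x, φ x ∂(μt 0))).congr
    (fun _ hs => h.integral_eq_add_primitive hφ hs) (h.integral_eq_add_primitive hφ ht)

lemma hasDerivWithinAt_integral (h : IsOUSolution ε μt) (hφ : IsSmoothOfGrowth 0 φ) {t : ℝ}
    (ht : 0 ≤ t) :
    HasDerivWithinAt (fun t => ∫ x, φ x ∂(μt t))
      (∫ x, L1op (fun y => -y + ε * Bmean (μt t)) φ x ∂(μt t)) (Ici 0) t := by
  refine h.hasDerivWithinAt_integral_of_continuousOn (hφ.mono zero_le_two) ?_ ht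
  exact ((h.continuousOn_integral (IsSmoothOfGrowth.fun_neg.l1op hφ)).add
    ((continuousOn_const.mul h.continuousOn_Bmean).mul
      (h.continuousOn_integral (hφ.deriv.mono zero_le_one)))).congr
    fun _ hs => h.integral_l1op (hφ.mono zero_le_one) hs

lemma Bmean_eq (h : IsOUSolution ε μt) {t : ℝ} (ht : 0 ≤ t) :
    Bmean (μt t) = Bmean (μt 0) * exp (-(1 - ε) * t) := by
  have hgen : ∀ s, 0 ≤ s → ∫ x, L1op (fun y => -y + ε * Bmean (μt s)) (fun x => x) x ∂(μt s)
      = -(1 - ε) * Bmean (μt s) := fun s hs => by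
    have := h.isProbabilityMeasure s hs
    rw [h.integral_l1op IsSmoothOfGrowth.fun_id hs]
    simp only [L1op, deriv_id'', deriv_const, mul_one, zero_add, integral_const,
      probReal_univ, smul_eq_mul, Bmean]
    rw [integral_neg]
    ring
  have hderiv : ∀ s, 0 ≤ s →
      HasDerivWithinAt (fun t => Bmean (μt t)) (-(1 - ε) * Bmean (μt s)) (Ici 0) s := fun s hs => by
    rw [← hgen s hs]
    exact h.hasDerivWithinAt_integral_of_continuousOn (IsSmoothOfGrowth.fun_id.mono one_le_two)
      ((continuousOn_const.mul h.continuousOn_Bmean).congr hgen) hs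
  simpa only [mul_zero, sub_zero] using eq_mul_exp_of_hasDerivWithinAt hderiv
    (fun _ => hasDerivAt_const_mul (-(1 - ε))) ht

end IsOUSolution

end Solution

section Characteristics

lemma abs_integral_cos_affine_sub_add_le {P : Measure ℝ} [IsProbabilityMeasure P]
    (hP : Integrable (fun x => x ^ 2) P) (k k' θ θ' : ℝ) :
    |∫ x, cos (k' * x + θ') ∂P - ∫ x, cos (k * x + θ) ∂P
        + ((k' - k) * ∫ x, x * sin (k * x + θ) ∂P + (θ' - θ) * ∫ x, sin (k * x + θ) ∂P)|
      ≤ 2 * ((k' - k) ^ 2 * ∫ x, x ^ 2 ∂P + (θ' - θ) ^ 2) := by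
  have hcos : ∀ a b : ℝ, Integrable (fun x => cos (a * x + b)) P := fun a b =>
    Integrable.of_bound (by fun_prop) 1 (Eventually.of_forall fun x => abs_cos_le_one _)
  have hsin : Integrable (fun x => sin (k * x + θ)) P :=
    Integrable.of_bound (by fun_prop) 1 (Eventually.of_forall fun x => abs_sin_le_one _)
  have hmulsin : Integrable (fun x => x * sin (k * x + θ)) P :=
    integrable_of_abs_le_mul_one_add_sq (C := 1) hP (by fun_prop) fun x => by
      rw [abs_mul]
      nlinarith [abs_sin_le_one (k * x + θ), abs_nonneg x, sq_abs x, sq_nonneg (|x| - 1)]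
  have hint := ((hP.const_mul ((k' - k) ^ 2)).add (integrable_const ((θ' - θ) ^ 2))).const_mul 2
  have hdiff : Integrable (fun x => cos (k' * x + θ') - cos (k * x + θ)) P :=
    (hcos k' θ').sub (hcos k θ)
  have hlin : Integrable
      (fun x => (k' - k) * (x * sin (k * x + θ)) + (θ' - θ) * sin (k * x + θ)) P :=
    (hmulsin.const_mul _).add (hsin.const_mul _)
  rw [← integral_const_mul, ← integral_const_mul, ← integral_add (hmulsin.const_mul _)
    (hsin.const_mul _), ← integral_sub (hcos _ _) (hcos _ _), ← integral_add hdiff hlin,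
    ← norm_eq_abs]
  refine (norm_integral_le_of_norm_le hint (Eventually.of_forall fun x => ?_)).trans_eq ?_
  · have htaylor := abs_cos_add_sub_add_mul_sin_le (k * x + θ) ((k' - k) * x + (θ' - θ))
    calc ‖cos (k' * x + θ') - cos (k * x + θ)
          + ((k' - k) * (x * sin (k * x + θ)) + (θ' - θ) * sin (k * x + θ))‖
        ≤ ((k' - k) * x + (θ' - θ)) ^ 2 := by
          rw [norm_eq_abs]
          convert htaylor using 2
          ring_nf
      _ ≤ 2 * ((k' - k) ^ 2 * x ^ 2 + (θ' - θ) ^ 2) := by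
          rw [← mul_pow]
          exact add_sq_le
  · simp only [integral_const_mul, Pi.add_apply]
    rw [integral_add (hP.const_mul _) (integrable_const _), integral_const_mul]
    simp

namespace IsOUSolution

variable {ε : ℝ} {μt : ℝ → Measure ℝ}

lemma hasDerivWithinAt_remainder_integral_cos (h : IsOUSolution ε μt) {κ θ : ℝ → ℝ} {κ' θ' s : ℝ}
    (hs : 0 ≤ s) (hκ : HasDerivAt κ κ' s) (hθ : HasDerivAt θ θ' s) :
    HasDerivWithinAt (fun t => ∫ x, cos (κ t * x + θ t) ∂(μt t) - ∫ x, cos (κ s * x + θ s) ∂(μt t)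
      + ((κ t - κ s) * ∫ x, x * sin (κ s * x + θ s) ∂(μt t)
        + (θ t - θ s) * ∫ x, sin (κ s * x + θ s) ∂(μt t))) 0 (Ici 0) s := by
  obtain ⟨M, hM⟩ := h.exists_integral_sq_le (s + 1) (by positivity)
  have hlittle : (fun t => 2 * (M * (κ t - κ s) ^ 2 + (θ t - θ s) ^ 2))
      =o[𝓝[Ici 0] s] fun t => t - s :=
    ((((isLittleO_sub_sq_of_hasDerivAt hκ).const_mul_left M).add
      (isLittleO_sub_sq_of_hasDerivAt hθ)).const_mul_left 2).mono nhdsWithin_le_nhds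
  rw [hasDerivWithinAt_iff_isLittleO]
  simp only [sub_self, zero_mul, add_zero, smul_zero, sub_zero]
  refine (Asymptotics.IsBigO.of_bound' ?_).trans_isLittleO hlittle
  filter_upwards [self_mem_nhdsWithin,
    mem_nhdsWithin_of_mem_nhds (Iic_mem_nhds (lt_add_one s))] with t ht hts
  have := h.isProbabilityMeasure t ht
  refine (abs_integral_cos_affine_sub_add_le (h.integrable_sq t ht) _ _ _ _).trans ?_
  refine le_trans ?_ (le_abs_self _)
  rw [mul_comm M]
  gcongr
  exact hM t ⟨ht, hts⟩

lemma integral_l1op_cos_affine (h : IsOUSolution ε μt) (k θ : ℝ) {t : ℝ} (ht : 0 ≤ t) :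
    ∫ x, L1op (fun y => -y + ε * Bmean (μt t)) (fun x => cos (k * x + θ)) x ∂(μt t)
      = k * ∫ x, x * sin (k * x + θ) ∂(μt t)
        - ε * Bmean (μt t) * k * ∫ x, sin (k * x + θ) ∂(μt t)
        - k ^ 2 * ∫ x, cos (k * x + θ) ∂(μt t) := by
  have haff : ∀ x, HasDerivAt (fun x => k * x + θ) k x := fun x => by
    simpa using ((hasDerivAt_id x).const_mul k).add_const θ
  have hderiv : deriv (fun x => cos (k * x + θ)) = fun x => -sin (k * x + θ) * k :=
    funext fun x => (haff x).cos.deriv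
  have hderiv₂ : ∀ x, deriv (fun x => -sin (k * x + θ) * k) x = -(cos (k * x + θ) * k) * k :=
    fun x => ((haff x).sin.neg.mul_const k).deriv
  have hcos := h.integrable ((IsSmoothOfGrowth.cos_affine k θ).mono zero_le_two) ht
  have hsin := h.integrable ((IsSmoothOfGrowth.sin_affine k θ).mono zero_le_two) ht
  have hmulsin : Integrable (fun x => x * sin (k * x + θ)) (μt t) := h.integrable
    ((IsSmoothOfGrowth.fun_id.mul (IsSmoothOfGrowth.sin_affine k θ)).mono one_le_two) ht
  have hdrift : Integrable
      (fun x => k * (x * sin (k * x + θ)) - ε * Bmean (μt t) * k * sin (k * x + θ)) (μt t) :=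
    (hmulsin.const_mul _).sub (hsin.const_mul _)
  rw [← integral_const_mul, ← integral_const_mul, ← integral_const_mul,
    ← integral_sub (hmulsin.const_mul _) (hsin.const_mul _),
    ← integral_sub hdrift (hcos.const_mul _)]
  congr 1 with x
  rw [L1op, hderiv, hderiv₂]
  ring

/-- The phases `κ t * x + θ t` are constant along the characteristics of the drift, so only the
diffusion term contributes to the derivative. -/
lemma hasDerivWithinAt_integral_cos_characteristic (h : IsOUSolution ε μt) {κ θ : ℝ → ℝ} {s : ℝ}
    (hs : 0 ≤ s) (hκ : HasDerivAt κ (κ s) s)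
    (hθ : HasDerivAt θ (-(ε * Bmean (μt s) * κ s)) s) :
    HasDerivWithinAt (fun t => ∫ x, cos (κ t * x + θ t) ∂(μt t))
      (-κ s ^ 2 * ∫ x, cos (κ s * x + θ s) ∂(μt s)) (Ici 0) s := by
  have hsin := h.continuousOn_integral
    ((IsSmoothOfGrowth.sin_affine (κ s) (θ s)).mono zero_le_one) s hs
  have hmulsin := h.continuousOn_integral
    (IsSmoothOfGrowth.fun_id.mul (IsSmoothOfGrowth.sin_affine (κ s) (θ s))) s hs
  have hdκ := hasDerivWithinAt_mul_of_eq_zero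
    (hκ.sub_const (κ s)).hasDerivWithinAt (sub_self (κ s)) hmulsin
  have hdθ := hasDerivWithinAt_mul_of_eq_zero
    (hθ.sub_const (θ s)).hasDerivWithinAt (sub_self (θ s)) hsin
  have hdμ := h.hasDerivWithinAt_integral (IsSmoothOfGrowth.cos_affine (κ s) (θ s)) hs
  rw [h.integral_l1op_cos_affine _ _ hs] at hdμ
  convert! ((h.hasDerivWithinAt_remainder_integral_cos hs hκ hθ).sub (hdκ.add hdθ)).add hdμ using 1
  · ext t
    simp only [Pi.add_apply, Pi.sub_apply, Pi.mul_apply]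
    ring
  · simp only [Pi.mul_apply]
    ring

lemma integral_cos_affine_eq (h : IsOUSolution ε μt) (k θ : ℝ) {T : ℝ} (hT : 0 ≤ T) :
    ∫ x, cos (k * x + θ) ∂(μt T) = exp (-(k ^ 2 * (1 - exp (-T) ^ 2) / 2))
      * ∫ x, cos (k * (exp (-T) * x + Bmean (μt 0) * (exp (-(1 - ε) * T) - exp (-T))) + θ)
          ∂(μt 0) := by
  set m := Bmean (μt 0)
  have hκ : ∀ s, HasDerivAt (fun t => k * exp (t - T)) (k * exp (s - T)) s := fun s => by
    simpa using ((hasDerivAt_id s).sub_const T).exp.const_mul k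
  have hA : ∀ s, HasDerivAt (fun t => -(k * exp (t - T)) ^ 2 / 2) (-(k * exp (s - T)) ^ 2) s :=
    fun s => by
      convert! ((hκ s).pow 2).neg.div_const 2 using 1
      ring
  have hθ : ∀ s, 0 ≤ s → HasDerivAt
      (fun t => θ + k * m * (exp (-(1 - ε) * T) - exp (-T) * exp (ε * t)))
      (-(ε * Bmean (μt s) * (k * exp (s - T)))) s := fun s hs => by
    convert! (((((hasDerivAt_id s).const_mul ε).exp.const_mul (exp (-T))).const_sub
      (exp (-(1 - ε) * T))).const_mul (k * m)).const_add θ using 1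
    have hexp : exp (-(1 - ε) * s) * exp (s - T) = exp (-T) * exp (ε * s) := by
      rw [← exp_add, ← exp_add]
      ring_nf
    rw [h.Bmean_eq hs, id_eq]
    linear_combination -(k * m * ε) * hexp
  have heq := eq_mul_exp_of_hasDerivWithinAt (fun s hs =>
    h.hasDerivWithinAt_integral_cos_characteristic hs (hκ s) (hθ s hs)) hA hT
  have hexp : exp (-T) * exp (ε * T) = exp (-(1 - ε) * T) := by rw [← exp_add]; ring_nf
  simp only [sub_self, exp_zero, mul_one, hexp, mul_zero, add_zero, zero_sub] at heq
  rw [heq, mul_comm]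
  congr 2
  · ring
  · ext x
    congr 1
    ring

end IsOUSolution

end Characteristics

section Representation

lemma integral_cos_affine_eq_re_mul_charFun (P : Measure ℝ) [IsFiniteMeasure P] (k θ : ℝ) :
    ∫ x, cos (k * x + θ) ∂P = (Complex.exp (θ * Complex.I) * charFun P k).re := by
  have hint : Integrable (fun x : ℝ => Complex.exp (θ * Complex.I)
      * Complex.exp (k * x * Complex.I)) P :=
    Integrable.of_bound (by fun_prop) 1 <| Eventually.of_forall fun x => by
      rw [← Complex.exp_add, ← add_mul, ← Complex.ofReal_mul, ← Complex.ofReal_add,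
        Complex.norm_exp_ofReal_mul_I]
  rw [charFun_apply_real, ← integral_const_mul]
  refine Eq.trans ?_ (integral_re hint)
  congr 1 with x
  rw [← Complex.exp_add, ← add_mul, ← Complex.ofReal_mul, ← Complex.ofReal_add, add_comm]
  exact (Complex.exp_ofReal_mul_I_re _).symm

lemma measure_ext_of_integral_cos_affine {P Q : Measure ℝ} [IsFiniteMeasure P] [IsFiniteMeasure Q]
    (h : ∀ k θ : ℝ, ∫ x, cos (k * x + θ) ∂P = ∫ x, cos (k * x + θ) ∂Q) : P = Q := by
  simp only [integral_cos_affine_eq_re_mul_charFun] at h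
  refine Measure.ext_of_charFun (funext fun k => Complex.ext ?_ ?_)
  · simpa using h k 0
  · simpa [Complex.exp_pi_div_two_mul_I] using h k (π / 2)

lemma integral_cos_affine_conv_gaussianReal (P : Measure ℝ) [IsFiniteMeasure P] (v : ℝ≥0)
    (k θ : ℝ) :
    ∫ x, cos (k * x + θ) ∂(P ∗ gaussianReal 0 v)
      = exp (-(k ^ 2 * v / 2)) * ∫ x, cos (k * x + θ) ∂P := by
  have hgauss : charFun (gaussianReal 0 v) k = (exp (-(k ^ 2 * v / 2)) : ℝ) := by
    rw [charFun_gaussianReal]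
    push_cast
    ring_nf
  rw [integral_cos_affine_eq_re_mul_charFun, integral_cos_affine_eq_re_mul_charFun, charFun_conv,
    hgauss, ← mul_assoc, Complex.re_mul_ofReal, mul_comm]

lemma IsOUSolution.eq_conv {ε : ℝ} {μt : ℝ → Measure ℝ} (h : IsOUSolution ε μt) {T : ℝ}
    (hT : 0 ≤ T) {v : ℝ≥0} (hv : (v : ℝ) = 1 - exp (-T) ^ 2) :
    μt T = (μt 0).map (fun x => exp (-T) * x + Bmean (μt 0) * (exp (-(1 - ε) * T) - exp (-T)))
      ∗ gaussianReal 0 v := by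
  have := h.isProbabilityMeasure T hT
  have := h.isProbabilityMeasure 0 le_rfl
  refine measure_ext_of_integral_cos_affine fun k θ => ?_
  rw [integral_cos_affine_conv_gaussianReal, integral_map (by fun_prop) (by fun_prop), hv,
    h.integral_cos_affine_eq k θ hT]

lemma gaussianReal_one_eq_conv {a : ℝ} {v : ℝ≥0} (hv : (v : ℝ) = 1 - a ^ 2) :
    gaussianReal 0 1 = (gaussianReal 0 1).map (fun x => a * x) ∗ gaussianReal 0 v := by
  rw [gaussianReal_map_const_mul, gaussianReal_conv_gaussianReal]
  congr 1
  · simp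
  · ext
    simp [hv]

end Representation

section GaussianSmoothing

lemma abs_exp_sub_one_le_abs_mul_exp_abs (u : ℝ) : |exp u - 1| ≤ |u| * exp |u| := by
  have h := Complex.norm_exp_sub_sum_le_norm_mul_exp u 1
  simp only [Finset.sum_range_one, pow_zero, Nat.factorial_zero, Nat.cast_one, div_one, pow_one,
    Complex.norm_real, norm_eq_abs] at h
  exact_mod_cast h

variable {v : ℝ≥0} {w : ℝ} {f : ℝ → ℝ}

lemma integrable_sq_gaussianReal (w : ℝ) (v : ℝ≥0) :
    Integrable (fun x => x ^ 2) (gaussianReal w v) :=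
  (memLp_id_gaussianReal 2).integrable_sq

lemma integral_sq_gaussianReal (w : ℝ) (v : ℝ≥0) : ∫ x, x ^ 2 ∂(gaussianReal w v) = v + w ^ 2 := by
  have h := variance_eq_sub (memLp_id_gaussianReal (μ := w) (v := v) 2)
  simp only [variance_id_gaussianReal, Pi.pow_apply, id_eq, integral_id_gaussianReal] at h
  linarith

lemma integral_exp_mul_gaussianReal_zero (v : ℝ≥0) (t : ℝ) :
    ∫ y, exp (t * y) ∂(gaussianReal 0 v) = exp (v * t ^ 2 / 2) := by
  simpa [mgf] using congrFun (mgf_id_gaussianReal (μ := 0) (v := v)) t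

lemma integrable_exp_mul_abs_gaussianReal (v : ℝ≥0) (t : ℝ) :
    Integrable (fun y => exp (t * |y|)) (gaussianReal 0 v) :=
  integrable_exp_mul_abs (integrable_exp_mul_gaussianReal t) (integrable_exp_mul_gaussianReal (-t))

lemma integral_exp_mul_abs_gaussianReal_le (v : ℝ≥0) (t : ℝ) :
    ∫ y, exp (t * |y|) ∂(gaussianReal 0 v) ≤ 2 * exp (v * t ^ 2 / 2) := by
  have hpos := integrable_exp_mul_gaussianReal (μ := 0) (v := v) t
  have hneg := integrable_exp_mul_gaussianReal (μ := 0) (v := v) (-t)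
  calc ∫ y, exp (t * |y|) ∂(gaussianReal 0 v)
      ≤ ∫ y, exp (t * y) + exp (-t * y) ∂(gaussianReal 0 v) := by
        refine integral_mono (integrable_exp_mul_abs_gaussianReal v t) (hpos.add hneg) fun y => ?_
        rcases abs_cases y with ⟨hy, -⟩ | ⟨hy, -⟩ <;> simp [hy, exp_nonneg]
    _ = 2 * exp (v * t ^ 2 / 2) := by
        rw [integral_add hpos hneg, integral_exp_mul_gaussianReal_zero,
          integral_exp_mul_gaussianReal_zero, neg_sq, two_mul]

lemma integral_gaussianReal_eq_integral_mul_exp (hv : v ≠ 0) (w : ℝ) (f : ℝ → ℝ) :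
    ∫ y, f y ∂(gaussianReal w v)
      = ∫ y, f y * exp ((w * y - w ^ 2 / 2) / v) ∂(gaussianReal 0 v) := by
  rw [integral_gaussianReal_eq_integral_smul hv, integral_gaussianReal_eq_integral_smul hv]
  congr 1 with y
  have hexp : exp (-(y - w) ^ 2 / (2 * v))
      = exp (-(y - 0) ^ 2 / (2 * v)) * exp ((w * y - w ^ 2 / 2) / v) := by
    rw [← exp_add]
    congr 1
    field_simp
    ring
  simp only [gaussianPDFReal, smul_eq_mul, hexp]
  ring

lemma one_add_sq_mul_abs_exp_sub_one_le (hv : v ≠ 0) (hw : |w| ≤ 1) (y : ℝ) :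
    (1 + y ^ 2) * |exp ((w * y - w ^ 2 / 2) / v) - 1|
      ≤ 2 * |w| * exp (2 / v) * exp ((1 + 2 / v) * |y|) := by
  have hv' : (0 : ℝ) < v := by positivity
  have hquad : 1 + y ^ 2 ≤ 2 * exp |y| := by
    have := quadratic_le_exp_of_nonneg (abs_nonneg y)
    rw [sq_abs] at this
    linarith [abs_nonneg y]
  have hsq : w ^ 2 ≤ |w| := by
    rw [← sq_abs]
    nlinarith [abs_nonneg w]
  have hnum : |w * y - w ^ 2 / 2| ≤ |w| * (1 + |y|) := by
    refine (abs_sub _ _).trans ?_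
    rw [abs_mul, abs_of_nonneg (by positivity : 0 ≤ w ^ 2 / 2)]
    linarith [abs_nonneg w]
  set r := (1 + |y|) / (v : ℝ) with hr
  have hu : |(w * y - w ^ 2 / 2) / v| ≤ |w| * r := by
    rw [abs_div, abs_of_pos hv', hr, ← mul_div_assoc]
    gcongr
  have hu' : |(w * y - w ^ 2 / 2) / v| ≤ r := hu.trans (mul_le_of_le_one_left (by positivity) hw)
  have hr' : r ≤ exp r := by linarith [add_one_le_exp r]
  calc (1 + y ^ 2) * |exp ((w * y - w ^ 2 / 2) / v) - 1|
      ≤ 2 * exp |y| * (|w| * exp r * exp r) := by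
        gcongr
        refine (abs_exp_sub_one_le_abs_mul_exp_abs _).trans ?_
        gcongr
        exact hu.trans (by gcongr)
    _ = 2 * |w| * exp (2 / v) * exp ((1 + 2 / v) * |y|) := by
        have hexp : exp |y| * exp r * exp r = exp (2 / v) * exp ((1 + 2 / v) * |y|) := by
          simp only [← exp_add, hr]
          ring_nf
        linear_combination 2 * |w| * hexp

lemma abs_integral_gaussianReal_sub_le_of_abs_le_one (hv : v ≠ 0) (hw : |w| ≤ 1)
    (hf : Measurable f) (hf_le : ∀ x, |f x| ≤ 1 + x ^ 2) :
    |∫ y, f y ∂(gaussianReal w v) - ∫ y, f y ∂(gaussianReal 0 v)|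
      ≤ 4 * exp (2 + v / 2 + 4 / v) * |w| := by
  have hv' : (v : ℝ) ≠ 0 := by positivity
  have hbound : ∀ y, ‖f y * (exp ((w * y - w ^ 2 / 2) / v) - 1)‖
      ≤ 2 * |w| * exp (2 / v) * exp ((1 + 2 / v) * |y|) := fun y => by
    rw [norm_mul]
    exact (mul_le_mul_of_nonneg_right (hf_le y) (abs_nonneg _)).trans
      (one_add_sq_mul_abs_exp_sub_one_le hv hw y)
  have hint := (integrable_exp_mul_abs_gaussianReal v (1 + 2 / v)).const_mul
    (2 * |w| * exp (2 / v))
  have hf_int : Integrable f (gaussianReal 0 v) :=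
    integrable_of_abs_le_mul_one_add_sq (C := 1) (integrable_sq_gaussianReal 0 v)
      hf.aestronglyMeasurable (by simpa using hf_le)
  have hdiff : Integrable (fun y => f y * (exp ((w * y - w ^ 2 / 2) / v) - 1))
      (gaussianReal 0 v) := hint.mono' (by fun_prop) (Eventually.of_forall hbound)
  have hsub : ∫ y, f y ∂(gaussianReal w v) - ∫ y, f y ∂(gaussianReal 0 v)
      = ∫ y, f y * (exp ((w * y - w ^ 2 / 2) / v) - 1) ∂(gaussianReal 0 v) := by
    rw [integral_gaussianReal_eq_integral_mul_exp hv, sub_eq_iff_eq_add,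
      ← integral_add hdiff hf_int]
    congr 1 with y
    ring
  calc |∫ y, f y ∂(gaussianReal w v) - ∫ y, f y ∂(gaussianReal 0 v)|
      = ‖∫ y, f y * (exp ((w * y - w ^ 2 / 2) / v) - 1) ∂(gaussianReal 0 v)‖ := by
        rw [hsub, norm_eq_abs]
    _ ≤ 2 * |w| * exp (2 / v) * ∫ y, exp ((1 + 2 / v) * |y|) ∂(gaussianReal 0 v) := by
        rw [← integral_const_mul]
        exact norm_integral_le_of_norm_le hint (Eventually.of_forall hbound)
    _ ≤ 2 * |w| * exp (2 / v) * (2 * exp (v * (1 + 2 / v) ^ 2 / 2)) := by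
        gcongr
        exact integral_exp_mul_abs_gaussianReal_le v _
    _ = 4 * exp (2 + v / 2 + 4 / v) * |w| := by
        have hexp : exp (2 / v) * exp (v * (1 + 2 / v) ^ 2 / 2) = exp (2 + v / 2 + 4 / v) := by
          rw [← exp_add]
          congr 1
          field_simp
          ring
        rw [← hexp]
        ring

lemma abs_integral_gaussianReal_le (w : ℝ) (v : ℝ≥0) (hf_le : ∀ x, |f x| ≤ 1 + x ^ 2) :
    |∫ y, f y ∂(gaussianReal w v)| ≤ 1 + (v + w ^ 2) := by
  simpa only [one_mul, integral_sq_gaussianReal] using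
    abs_integral_le_mul_one_add_integral_sq (C := 1) (integrable_sq_gaussianReal w v)
      (by simpa using hf_le)

lemma abs_integral_gaussianReal_sub_le (hv : v ≠ 0) (w : ℝ) (hf : Measurable f)
    (hf_le : ∀ x, |f x| ≤ 1 + x ^ 2) :
    |∫ y, f y ∂(gaussianReal w v) - ∫ y, f y ∂(gaussianReal 0 v)|
      ≤ 4 * exp (2 + v / 2 + 4 / v) * (|w| + w ^ 2) := by
  rcases le_total |w| 1 with hw | hw
  · refine (abs_integral_gaussianReal_sub_le_of_abs_le_one hv hw hf hf_le).trans ?_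
    gcongr
    exact le_add_of_nonneg_right (sq_nonneg w)
  · have hw' : 1 ≤ w ^ 2 := (one_le_sq_iff_one_le_abs w).2 hw
    have hexp : 2 + v / 2 + 4 / v ≤ exp (2 + v / 2 + 4 / v) := by
      linarith [add_one_le_exp (2 + v / 2 + 4 / v : ℝ)]
    have hv' : (0 : ℝ) ≤ 4 / v := by positivity
    calc |∫ y, f y ∂(gaussianReal w v) - ∫ y, f y ∂(gaussianReal 0 v)|
        ≤ (1 + (v + w ^ 2)) + (1 + (v + 0 ^ 2)) := (abs_sub _ _).trans <|
          add_le_add (abs_integral_gaussianReal_le w v hf_le)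
            (abs_integral_gaussianReal_le 0 v hf_le)
      _ ≤ (3 + 2 * v) * w ^ 2 := by nlinarith [v.coe_nonneg]
      _ ≤ 4 * exp (2 + v / 2 + 4 / v) * (|w| + w ^ 2) := by
          gcongr
          · linarith
          · exact le_add_of_nonneg_left (abs_nonneg w)

variable {Q : Measure ℝ}

lemma integrable_sq_conv {R : Measure ℝ} [IsFiniteMeasure Q] [IsFiniteMeasure R]
    (hQ : Integrable (fun x => x ^ 2) Q) (hR : Integrable (fun x => x ^ 2) R) :
    Integrable (fun x => x ^ 2) (Q ∗ R) := by
  rw [Measure.conv, integrable_map_measure (by fun_prop) (by fun_prop)]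
  refine (((hQ.comp_fst R).add (hR.comp_snd Q)).const_mul 2).mono' (by fun_prop) ?_
  refine Eventually.of_forall fun z => ?_
  simpa [abs_of_nonneg (sq_nonneg (z.1 + z.2))] using add_sq_le (a := z.1) (b := z.2)

lemma abs_integral_conv_gaussianReal_sub_le [IsProbabilityMeasure Q] (hv : v ≠ 0)
    (hQ : Integrable (fun x => x ^ 2) Q) (hf : Measurable f) (hf_le : ∀ x, |f x| ≤ 1 + x ^ 2) :
    |∫ x, f x ∂(Q ∗ gaussianReal 0 v) - ∫ y, f y ∂(gaussianReal 0 v)|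
      ≤ 4 * exp (2 + v / 2 + 4 / v) * ∫ x, (|x| + x ^ 2) ∂Q := by
  have hconv : Integrable f (Q ∗ gaussianReal 0 v) :=
    integrable_of_abs_le_mul_one_add_sq (C := 1)
      (integrable_sq_conv hQ (integrable_sq_gaussianReal 0 v)) hf.aestronglyMeasurable
      (by simpa using hf_le)
  have hmap : ∀ x, ∫ y, f (x + y) ∂(gaussianReal 0 v) = ∫ y, f y ∂(gaussianReal x v) := fun x => by
    rw [← integral_map (φ := (x + ·)) (by fun_prop) hf.aestronglyMeasurable,
      gaussianReal_map_const_add, zero_add]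
  have hmeas : AEStronglyMeasurable (fun x => ∫ y, f y ∂(gaussianReal x v)) Q := by
    simp only [← hmap]
    exact StronglyMeasurable.aestronglyMeasurable <| StronglyMeasurable.integral_prod_right
      (f := fun x y => f (x + y)) (hf.comp measurable_add).stronglyMeasurable
  have hinner : Integrable (fun x => ∫ y, f y ∂(gaussianReal x v)) Q :=
    ((integrable_const (1 : ℝ)).add ((integrable_const (v : ℝ)).add hQ)).mono' hmeas
      (Eventually.of_forall fun x => abs_integral_gaussianReal_le x v hf_le)
  have habs : Integrable (fun x => |x|) Q :=
    (integrable_of_abs_le_mul_one_add_sq (C := 1) hQ (f := fun x => x) (by fun_prop) fun x => by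
      nlinarith [sq_abs x, sq_nonneg (|x| - 1), abs_nonneg x]).abs
  calc |∫ x, f x ∂(Q ∗ gaussianReal 0 v) - ∫ y, f y ∂(gaussianReal 0 v)|
      = ‖∫ x, (∫ y, f y ∂(gaussianReal x v) - ∫ y, f y ∂(gaussianReal 0 v)) ∂Q‖ := by
        rw [integral_conv hconv, integral_sub hinner (integrable_const _)]
        simp [hmap]
    _ ≤ ∫ x, 4 * exp (2 + v / 2 + 4 / v) * (|x| + x ^ 2) ∂Q :=
        norm_integral_le_of_norm_le ((habs.add hQ).const_mul _) <|
          Eventually.of_forall fun x => abs_integral_gaussianReal_sub_le hv x hf hf_le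
    _ = 4 * exp (2 + v / 2 + 4 / v) * ∫ x, (|x| + x ^ 2) ∂Q := integral_const_mul _ _

end GaussianSmoothing

section Convergence

lemma integrable_sq_map_affine {P : Measure ℝ} [IsFiniteMeasure P]
    (hP : Integrable (fun x => x ^ 2) P) (a c : ℝ) :
    Integrable (fun x => x ^ 2) (P.map fun x => a * x + c) := by
  rw [integrable_map_measure (by fun_prop) (by fun_prop)]
  refine integrable_of_abs_le_mul_one_add_sq (C := 2 * (a ^ 2 + c ^ 2)) hP (by fun_prop) fun x => ?_
  simp only [Function.comp_apply, abs_sq]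
  nlinarith [add_sq_le (a := a * x) (b := c), sq_nonneg a, mul_nonneg (sq_nonneg c) (sq_nonneg x)]

lemma integral_abs_add_sq_map_affine_le {P : Measure ℝ} [IsProbabilityMeasure P]
    (hP : Integrable (fun x => x ^ 2) P) {a c r B : ℝ} (hr : r ≤ 1) (ha : |a| ≤ r)
    (hc : |c| ≤ r * B) :
    ∫ y, (|y| + y ^ 2) ∂(P.map fun x => a * x + c)
      ≤ r * (1 + 3 * B ^ 2 + 3 * ∫ x, x ^ 2 ∂P) := by
  have hr₀ : 0 ≤ r := (abs_nonneg a).trans ha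
  have hbound : ∀ x, ‖|a * x + c| + (a * x + c) ^ 2‖ ≤ r * (1 + 3 * B ^ 2) + r * 3 * x ^ 2 :=
    fun x => by
      have habs : |a * x + c| ≤ r * (|x| + B) := by
        refine (abs_add_le _ _).trans ?_
        rw [abs_mul, mul_add]
        gcongr
      have hsq : (a * x + c) ^ 2 ≤ r * (|x| + B) ^ 2 := by
        calc (a * x + c) ^ 2 = |a * x + c| ^ 2 := (sq_abs _).symm
          _ ≤ (r * (|x| + B)) ^ 2 := by gcongr
          _ = r * r * (|x| + B) ^ 2 := by ring
          _ ≤ r * (|x| + B) ^ 2 := by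
            gcongr
            exact mul_le_of_le_one_left hr₀ hr
      have hpoly : |x| + B + (|x| + B) ^ 2 ≤ 1 + 3 * B ^ 2 + 3 * x ^ 2 := by
        rw [← sq_abs x]
        nlinarith [sq_nonneg (|x| - B), sq_nonneg (|x| - 1), sq_nonneg (B - 1)]
      rw [norm_of_nonneg (by positivity)]
      nlinarith [mul_le_mul_of_nonneg_left hpoly hr₀]
  have hint : Integrable (fun x => r * 3 * x ^ 2) P := hP.const_mul _
  calc ∫ y, (|y| + y ^ 2) ∂(P.map fun x => a * x + c)
      = ∫ x, (|a * x + c| + (a * x + c) ^ 2) ∂P := integral_map (by fun_prop) (by fun_prop)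
    _ ≤ ∫ x, (r * (1 + 3 * B ^ 2) + r * 3 * x ^ 2) ∂P := (le_norm_self _).trans <|
        norm_integral_le_of_norm_le ((integrable_const _).add hint) (Eventually.of_forall hbound)
    _ = r * (1 + 3 * B ^ 2 + 3 * ∫ x, x ^ 2 ∂P) := by
        rw [integral_add (integrable_const _) hint, integral_const_mul (r * 3)]
        simp only [integral_const, probReal_univ, one_smul]
        ring

lemma abs_integral_map_affine_conv_gaussianReal_sub_le {P : Measure ℝ} [IsProbabilityMeasure P]
    (hP : Integrable (fun x => x ^ 2) P) {v : ℝ≥0} (hv : v ≠ 0) {a c r B : ℝ} (hr : r ≤ 1)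
    (ha : |a| ≤ r) (hc : |c| ≤ r * B) {f : ℝ → ℝ} (hf : Measurable f)
    (hf_le : ∀ x, |f x| ≤ 1 + x ^ 2) :
    |∫ x, f x ∂(P.map (fun x => a * x + c) ∗ gaussianReal 0 v) - ∫ x, f x ∂(gaussianReal 0 v)|
      ≤ 4 * exp (2 + v / 2 + 4 / v) * (r * (1 + 3 * B ^ 2 + 3 * ∫ x, x ^ 2 ∂P)) := by
  have : IsProbabilityMeasure (P.map fun x => a * x + c) :=
    Measure.isProbabilityMeasure_map (by fun_prop)
  refine (abs_integral_conv_gaussianReal_sub_le hv (integrable_sq_map_affine hP a c) hf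
    hf_le).trans ?_
  gcongr
  exact integral_abs_add_sq_map_affine_le hP hr ha hc

namespace IsOUSolution

variable {ε : ℝ} {μt : ℝ → Measure ℝ}

lemma abs_integral_sub_gaussianReal_le (h : IsOUSolution ε μt) {δ t : ℝ} (hδ₀ : 0 ≤ δ)
    (hδ₁ : δ ≤ 1) (hδε : δ ≤ 1 - ε) (ht : 0 ≤ t) {v : ℝ≥0} (hv₀ : v ≠ 0)
    (hv : (v : ℝ) = 1 - exp (-t) ^ 2) {f : ℝ → ℝ} (hf : Measurable f)
    (hf_le : ∀ x, |f x| ≤ 1 + x ^ 2) :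
    |∫ x, f x ∂(μt t) - ∫ x, f x ∂(gaussianReal 0 1)| ≤ 4 * exp (2 + v / 2 + 4 / v)
      * (5 + 3 * Bmean (μt 0) ^ 2 + 3 * ∫ x, x ^ 2 ∂(μt 0)) * exp (-δ * t) := by
  have := h.isProbabilityMeasure 0 le_rfl
  have hr : exp (-δ * t) ≤ 1 := exp_le_one_iff.2 (by nlinarith)
  have ha : exp (-t) ≤ exp (-δ * t) := exp_le_exp.2 (by nlinarith)
  have hb : exp (-(1 - ε) * t) ≤ exp (-δ * t) := exp_le_exp.2 (by nlinarith)
  have hc : |Bmean (μt 0) * (exp (-(1 - ε) * t) - exp (-t))|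
      ≤ exp (-δ * t) * |Bmean (μt 0)| := by
    rw [abs_mul, mul_comm]
    gcongr
    exact abs_sub_le_of_nonneg_of_le (exp_nonneg _) hb (exp_nonneg _) ha
  have ha' : |exp (-t)| ≤ exp (-δ * t) := by rwa [abs_exp]
  have hsol := abs_integral_map_affine_conv_gaussianReal_sub_le (h.integrable_sq 0 le_rfl) hv₀ hr
    ha' hc hf hf_le
  have hstat := abs_integral_map_affine_conv_gaussianReal_sub_le (integrable_sq_gaussianReal 0 1)
    hv₀ hr ha' (c := 0) (B := 0) (by simp) hf hf_le
  rw [← h.eq_conv ht hv, sq_abs] at hsol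
  simp only [add_zero, ← gaussianReal_one_eq_conv hv, integral_sq_gaussianReal,
    NNReal.coe_one] at hstat
  rw [abs_sub_comm] at hstat
  refine (abs_sub_le _ _ _).trans ((add_le_add hsol hstat).trans_eq ?_)
  ring

lemma exists_abs_integral_sub_gaussianReal_le_of_one_le (h : IsOUSolution ε μt) {δ : ℝ}
    (hδ₀ : 0 ≤ δ) (hδ₁ : δ ≤ 1) (hδε : δ ≤ 1 - ε) :
    ∃ C, ∀ t, 1 ≤ t → ∀ f : ℝ → ℝ, Measurable f → (∀ x, |f x| ≤ 1 + x ^ 2) →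
      |∫ x, f x ∂(μt t) - ∫ x, f x ∂(gaussianReal 0 1)| ≤ C * exp (-δ * t) := by
  refine ⟨4 * exp (2 + 1 / 2 + 4 / (1 / 2))
    * (5 + 3 * Bmean (μt 0) ^ 2 + 3 * ∫ x, x ^ 2 ∂(μt 0)), fun t ht f hf hf_le => ?_⟩
  have hexp : exp (-t) ≤ 1 / 2 := by
    rw [exp_neg, ← one_div]
    gcongr
    linarith [add_one_le_exp t]
  have hv₂ : 1 / 2 ≤ 1 - exp (-t) ^ 2 := by nlinarith [exp_pos (-t)]
  have hv₁ : 1 - exp (-t) ^ 2 ≤ 1 := sub_le_self _ (sq_nonneg _)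
  lift 1 - exp (-t) ^ 2 to ℝ≥0 using by linarith with v hv
  have hv₀ : v ≠ 0 := by
    rintro rfl
    norm_num at hv₂
  refine (h.abs_integral_sub_gaussianReal_le hδ₀ hδ₁ hδε (by linarith) hv₀ hv hf hf_le).trans ?_
  gcongr

lemma exists_abs_integral_sub_gaussianReal_le_of_le (h : IsOUSolution ε μt) {δ : ℝ}
    (hδ : 0 ≤ δ) {T : ℝ} (hT : 0 < T) :
    ∃ C, ∀ t ∈ Icc 0 T, ∀ f : ℝ → ℝ, (∀ x, |f x| ≤ 1 + x ^ 2) →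
      |∫ x, f x ∂(μt t) - ∫ x, f x ∂(gaussianReal 0 1)| ≤ C * exp (-δ * t) := by
  obtain ⟨M, hM⟩ := h.exists_integral_sq_le T hT
  refine ⟨(3 + M) * exp (δ * T), fun t ht f hf_le => ?_⟩
  have := h.isProbabilityMeasure t ht.1
  have hsol := abs_integral_le_mul_one_add_integral_sq (C := 1) (h.integrable_sq t ht.1)
    (by simpa using hf_le)
  have hstat := abs_integral_gaussianReal_le 0 1 hf_le
  have hM₀ : 0 ≤ M := (integral_nonneg fun x => sq_nonneg x).trans (hM t ht)
  have hdecay : 1 ≤ exp (δ * T) * exp (-δ * t) := by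
    rw [← exp_add, one_le_exp_iff]
    nlinarith [ht.2]
  calc |∫ x, f x ∂(μt t) - ∫ x, f x ∂(gaussianReal 0 1)|
      ≤ 3 + M := by
        rw [NNReal.coe_one] at hstat
        linarith [abs_sub (∫ x, f x ∂(μt t)) (∫ x, f x ∂(gaussianReal 0 1)), hM t ht]
    _ ≤ (3 + M) * (exp (δ * T) * exp (-δ * t)) := le_mul_of_one_le_right (by positivity) hdecay
    _ = (3 + M) * exp (δ * T) * exp (-δ * t) := (mul_assoc _ _ _).symm

lemma exists_abs_integral_sub_gaussianReal_le (h : IsOUSolution ε μt) {δ : ℝ}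
    (hδ₀ : 0 ≤ δ) (hδ₁ : δ ≤ 1) (hδε : δ ≤ 1 - ε) :
    ∃ C > 0, ∀ t, 0 ≤ t → ∀ f : ℝ → ℝ, Measurable f → (∀ x, |f x| ≤ 1 + x ^ 2) →
      |∫ x, f x ∂(μt t) - ∫ x, f x ∂(gaussianReal 0 1)| ≤ C * exp (-δ * t) := by
  obtain ⟨C₁, hlong⟩ := h.exists_abs_integral_sub_gaussianReal_le_of_one_le hδ₀ hδ₁ hδε
  obtain ⟨C₀, hshort⟩ := h.exists_abs_integral_sub_gaussianReal_le_of_le hδ₀ one_pos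
  refine ⟨max (max C₀ C₁) 1, by positivity, fun t ht f hf hf_le => ?_⟩
  rcases le_total t 1 with ht₁ | ht₁
  · refine (hshort t ⟨ht, ht₁⟩ f hf_le).trans ?_
    gcongr
    exact (le_max_left _ _).trans (le_max_left _ _)
  · refine (hlong t ht₁ f hf hf_le).trans ?_
    gcongr
    exact (le_max_right _ _).trans (le_max_left _ _)

end IsOUSolution

end Convergence

theorem stmt13_OU_convergence_general {ε : ℝ} (hε : ε < 1) {μt : ℝ → Measure ℝ}
    (h : IsOUSolution ε μt) {W : ℝ → ℝ} (hW : ∀ x, W x ∈ Icc 0 (1 + x ^ 2)) :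
    ∃ α₁ > 0, ∃ α₂ > 0, ∀ t, 0 ≤ t →
      wDist1 W (μt t) (gaussianReal 0 1) ≤ α₁ * exp (-α₂ * t) := by
  have hδ : 0 < min 1 (1 - ε) := lt_min one_pos (sub_pos.2 hε)
  obtain ⟨C, hC, hconv⟩ :=
    h.exists_abs_integral_sub_gaussianReal_le hδ.le (min_le_left _ _) (min_le_right _ _)
  refine ⟨C, hC, min 1 (1 - ε), hδ, fun t ht => Real.iSup_le (fun f => ?_) (by positivity)⟩
  exact (le_abs_self _).trans <|
    hconv t ht f.1 f.2.1 fun x => (f.2.2 x).trans (hW x).2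

/-- **Exponential convergence for the mean-field Ornstein–Uhlenbeck model with
`ε ∈ [0,1)`**: solutions of `∂_tμ_t = (μ_t)'' + ((x - εB(μ_t))μ_t)'` converge
exponentially, in total variation with weight `(1+x²)^{1/2}`, to the standard
Gaussian measure. -/
theorem stmt13_OU_convergence
    (ε : ℝ) (hε0 : 0 ≤ ε) (hε1 : ε < 1)
    (ν : Measure ℝ) (hν : IsProbabilityMeasure ν)
    (hν2 : Integrable (fun x => x ^ 2) ν)
    (μt : ℝ → Measure ℝ)
    (hμt0 : μt 0 = ν)
    (hμtProb : ∀ t, 0 ≤ t → IsProbabilityMeasure (μt t))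
    (hμtInt : ∀ t, 0 ≤ t → Integrable (fun x => x ^ 2) (μt t))
    (hμtMom : ∀ T : ℝ, 0 < T → ∃ M : ℝ, ∀ t ∈ Set.Icc (0:ℝ) T,
      (∫ x, x ^ 2 ∂(μt t)) ≤ M)
    -- the defining identity, valid for every `φ ∈ C²(ℝ)` with
    -- `(|φ| + |φ'| + |φ''|)/(1+x²)` bounded
    (hμtSol : ∀ φ : ℝ → ℝ, ContDiff ℝ 2 φ →
      (∃ M : ℝ, ∀ x, |φ x| + |deriv φ x| + |deriv (deriv φ) x| ≤ M * (1 + x ^ 2)) →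
      ∀ t : ℝ, 0 ≤ t →
        ∫ x, φ x ∂(μt t) - ∫ x, φ x ∂ν
          = ∫ s in (0:ℝ)..t,
              ∫ x, L1op (fun y => -y + ε * Bmean (μt s)) φ x ∂(μt s)) :
    ∃ α₁ > (0:ℝ), ∃ α₂ > (0:ℝ), ∀ t : ℝ, 0 ≤ t →
      wDist1 (fun x => Real.sqrt (1 + x ^ 2)) (μt t) (gaussianReal 0 1)
        ≤ α₁ * Real.exp (-α₂ * t) := by
  subst hμt0
  exact stmt13_OU_convergence_general hε1 ⟨hμtProb, hμtInt, hμtMom, hμtSol⟩ fun x =>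
    ⟨sqrt_nonneg _, sqrt_le_self_iff.2 (Or.inr (le_add_of_nonneg_right (sq_nonneg x)))⟩
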